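/- arXiv:0809.3494 — 2 statements merged into one kernel-verified Lean document; each statement's English description precedes it below -/
import Mathlib

section
/- Assume the continuity condition holds and that Σ_{k≥0} |V_i(k)|·λ(k) < ∞. Then there exists, for each integer k ≥ −1, a function p^{[k]} : A × A^{V_i(k)} → [0,1] with Σ_{a∈A} p^{[k]}(a,w) = 1 for every w ∈ A^{V_i(k)} (for k = −1, p^{[−1]} is a probability on A not depending on any configuration), such that for every a ∈ A and every configuration η ∈ A^{ℤ^d}, p(a,η) = Σ_{k≥−1} λ(k)·p^{[k]}(a, η(V_i(k))). -/
open scoped BigOperators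

/-- The L¹-norm on `ℤ^d`. -/
def norm1 {d : ℕ} (x : Fin d → ℤ) : ℤ := ∑ u, |x u|

/-- `V_i(k) = {j : ‖j - i‖₁ ≤ k}`; for `k = -1` this is the empty set. -/
def ball {d : ℕ} (i : Fin d → ℤ) (k : ℤ) : Set (Fin d → ℤ) :=
  {j | norm1 (j - i) ≤ k}

/-- `r^{[k]}(a, η(V_i(k))) = inf {p(a,ζ) : ζ(V_i(k)) = η(V_i(k))}`. -/
noncomputable def rfun {d : ℕ} {A : Type*} (i : Fin d → ℤ)
    (p : A → ((Fin d → ℤ) → A) → ℝ) (k : ℤ) (a : A) (η : (Fin d → ℤ) → A) : ℝ :=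
  sInf {x | ∃ ζ : (Fin d → ℤ) → A, (∀ j ∈ ball i k, η j = ζ j) ∧ p a ζ = x}

/-- The continuity modulus `δ(k)`. -/
noncomputable def delta {d : ℕ} {A : Type*} (i : Fin d → ℤ)
    (p : A → ((Fin d → ℤ) → A) → ℝ) (k : ℤ) : ℝ :=
  sSup {x | ∃ (a : A) (η ζ : (Fin d → ℤ) → A),
    (∀ j ∈ ball i k, η j = ζ j) ∧ |p a η - p a ζ| = x}

/-- `α(k)`; for `k ≥ 0` it is the min over `w ∈ A^{V_i(k)}` of `Σ_a r^{[k]}(a,w)`,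
and for `k = -1` it is `Σ_a r^{[-1]}(a)` (the expression below depends only on
`η(V_i(k))`, so the infimum over configurations realizes the minimum over `w`). -/
noncomputable def alphafun {d : ℕ} {A : Type*} [Fintype A] (i : Fin d → ℤ)
    (p : A → ((Fin d → ℤ) → A) → ℝ) (k : ℤ) : ℝ :=
  sInf {x | ∃ η : (Fin d → ℤ) → A, (∑ a, rfun i p k a η) = x}

/-- `λ(-1) = α(-1)` and `λ(k) = α(k) - α(k-1)` for `k ≥ 0`. -/
noncomputable def lamfun {d : ℕ} {A : Type*} [Fintype A] (i : Fin d → ℤ)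
    (p : A → ((Fin d → ℤ) → A) → ℝ) (k : ℤ) : ℝ :=
  if k = -1 then alphafun i p (-1) else alphafun i p k - alphafun i p (k - 1)

/-!
For each configuration `η` the lower bounds `r^{[k]}(·, η)` increase with `k` and lie below
`p(·, η)`, and the layers up to `k` carry total mass `α(k) ≤ ∑ a, r^{[k]}(a, η)`. Fill greedily: if
the layers before `k` form a mass `Q ≤ r^{[k]}(·, η)`, layer `k` has mass `λ(k)` and is proportional
to the gap `r^{[k]}(·, η) - Q`. As `λ(k)` is at most the total gap, the enlarged mass is still below
`r^{[k]}(·, η)`, hence below `r^{[k + 1]}(·, η)`. Only `r^{[m]}(·, η)` with `m ≤ k` has been used,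
so layer `k` is a function of `η(V_i(k))`. Continuity and finiteness of `A` give `α(k) → 1`, and
masses below `p(·, η)` whose totals tend to that of `p(·, η)` converge to it.
-/

open Filter Finset Topology

section NormalizeMass

variable {A : Type*} [Fintype A] {f : A → ℝ}

/-- The probability vector proportional to `f`; when `f` has total mass zero, the uniform one. -/
noncomputable def normalizeMass (f : A → ℝ) : A → ℝ :=
  if ∑ a, f a = 0 then fun _ => (Fintype.card A : ℝ)⁻¹ else (∑ a, f a)⁻¹ • f

theorem normalizeMass_nonneg (hf : 0 ≤ f) : 0 ≤ normalizeMass f := by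
  unfold normalizeMass
  split_ifs
  · exact fun _ => inv_nonneg.2 (Nat.cast_nonneg _)
  · exact smul_nonneg (inv_nonneg.2 (sum_nonneg fun a _ => hf a)) hf

theorem sum_normalizeMass [Nonempty A] (f : A → ℝ) : ∑ a, normalizeMass f a = 1 := by
  unfold normalizeMass
  split_ifs with h
  · simp
  · simp only [Pi.smul_apply, smul_eq_mul, ← mul_sum, inv_mul_cancel₀ h]

theorem sum_smul_normalizeMass (hf : 0 ≤ f) : (∑ a, f a) • normalizeMass f = f := by
  by_cases h : ∑ a, f a = 0
  · rw [h, zero_smul, (Fintype.sum_eq_zero_iff_of_nonneg hf).1 h]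
  · rw [normalizeMass, if_neg h, smul_inv_smul₀ h]

theorem smul_normalizeMass_le (hf : 0 ≤ f) {c : ℝ} (hc : c ≤ ∑ a, f a) :
    c • normalizeMass f ≤ f :=
  (smul_le_smul_of_nonneg_right hc (normalizeMass_nonneg hf)).trans_eq (sum_smul_normalizeMass hf)

end NormalizeMass

section GreedyFilling

variable {A : Type*} [Fintype A] {R R' : ℕ → A → ℝ} {w : ℕ → ℝ}

/-- The mass placed on `A` by the first `n` steps of the greedy filling: step `m` adds total mass
`w m`, distributed proportionally to the room left below `R m`. -/
noncomputable def greedyMass (R : ℕ → A → ℝ) (w : ℕ → ℝ) : ℕ → A → ℝ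
  | 0 => 0
  | n + 1 => greedyMass R w n + w n • normalizeMass (R n - greedyMass R w n)

/-- The distribution of the mass added at step `n` of the greedy filling `greedyMass`. -/
noncomputable def greedyKernel (R : ℕ → A → ℝ) (w : ℕ → ℝ) (n : ℕ) : A → ℝ :=
  normalizeMass (R n - greedyMass R w n)

theorem greedyMass_succ (R : ℕ → A → ℝ) (w : ℕ → ℝ) (n : ℕ) :
    greedyMass R w (n + 1) = greedyMass R w n + w n • greedyKernel R w n :=
  rfl

theorem greedyMass_eq_sum (R : ℕ → A → ℝ) (w : ℕ → ℝ) (n : ℕ) :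
    greedyMass R w n = ∑ m ∈ range n, w m • greedyKernel R w m := by
  induction n with
  | zero => rfl
  | succ n ih => rw [sum_range_succ, ← ih, greedyMass_succ]

theorem greedyMass_congr {n : ℕ} (h : ∀ m < n, R m = R' m) :
    greedyMass R w n = greedyMass R' w n := by
  induction n with
  | zero => rfl
  | succ n ih =>
    simp only [greedyMass, ih fun m hm => h m (hm.trans n.lt_succ_self), h n n.lt_succ_self]

theorem greedyKernel_congr {n : ℕ} (h : ∀ m ≤ n, R m = R' m) :
    greedyKernel R w n = greedyKernel R' w n := by
  rw [greedyKernel, greedyKernel, h n le_rfl, greedyMass_congr fun m hm => h m hm.le]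

variable [Nonempty A]

theorem sum_greedyKernel (R : ℕ → A → ℝ) (w : ℕ → ℝ) (n : ℕ) :
    ∑ a, greedyKernel R w n a = 1 :=
  sum_normalizeMass _

theorem sum_greedyMass (R : ℕ → A → ℝ) (w : ℕ → ℝ) (n : ℕ) :
    ∑ a, greedyMass R w n a = ∑ m ∈ range n, w m := by
  simp only [greedyMass_eq_sum, Finset.sum_apply, Pi.smul_apply, smul_eq_mul]
  rw [sum_comm]
  simp only [← mul_sum, sum_greedyKernel, mul_one]

theorem greedyMass_le (hR0 : 0 ≤ R 0) (hR : Monotone R)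
    (hw : ∀ n, ∑ m ∈ range (n + 1), w m ≤ ∑ a, R n a) (n : ℕ) : greedyMass R w n ≤ R n := by
  induction n with
  | zero => exact hR0
  | succ n ih =>
    have mass_le_gap : w n ≤ ∑ a, (R n - greedyMass R w n) a := by
      simp only [Pi.sub_apply, sum_sub_distrib, sum_greedyMass]
      linarith [hw n, sum_range_succ w n]
    calc greedyMass R w (n + 1)
        ≤ greedyMass R w n + (R n - greedyMass R w n) :=
          add_le_add_right (smul_normalizeMass_le (sub_nonneg.2 ih) mass_le_gap) _
      _ = R n := add_sub_cancel _ _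
      _ ≤ R (n + 1) := hR n.le_succ

theorem greedyKernel_mem_stdSimplex (hR0 : 0 ≤ R 0) (hR : Monotone R)
    (hw : ∀ n, ∑ m ∈ range (n + 1), w m ≤ ∑ a, R n a) (n : ℕ) :
    greedyKernel R w n ∈ stdSimplex ℝ A :=
  ⟨normalizeMass_nonneg (sub_nonneg.2 (greedyMass_le hR0 hR hw n)), sum_greedyKernel R w n⟩

theorem tendsto_greedyMass (hR0 : 0 ≤ R 0) (hR : Monotone R)
    (hw : ∀ n, ∑ m ∈ range (n + 1), w m ≤ ∑ a, R n a) {μ : A → ℝ} (hRμ : ∀ n, R n ≤ μ)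
    (hwμ : Tendsto (fun n => ∑ m ∈ range n, w m) atTop (𝓝 (∑ a, μ a))) (a : A) :
    Tendsto (fun n => greedyMass R w n a) atTop (𝓝 (μ a)) := by
  have mass_le (n : ℕ) : greedyMass R w n ≤ μ := (greedyMass_le hR0 hR hw n).trans (hRμ n)
  have deficit_le (n : ℕ) :
      μ a - greedyMass R w n a ≤ ∑ b, μ b - ∑ m ∈ range n, w m := by
    rw [← sum_greedyMass R w n, ← sum_sub_distrib]
    exact single_le_sum (f := fun b => μ b - greedyMass R w n b)
      (fun b _ => sub_nonneg.2 (mass_le n b)) (mem_univ a)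
  have lower_tendsto :
      Tendsto (fun n => μ a - (∑ b, μ b - ∑ m ∈ range n, w m)) atTop (𝓝 (μ a)) := by
    simpa using (hwμ.const_sub (∑ b, μ b)).const_sub (μ a)
  exact tendsto_of_tendsto_of_tendsto_of_le_of_le lower_tendsto tendsto_const_nhds
    (fun n => sub_le_comm.1 (deficit_le n)) fun n => mass_le n a

theorem hasSum_greedyKernel (hR0 : 0 ≤ R 0) (hR : Monotone R) (hw0 : 0 ≤ w)
    (hw : ∀ n, ∑ m ∈ range (n + 1), w m ≤ ∑ a, R n a) {μ : A → ℝ} (hRμ : ∀ n, R n ≤ μ)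
    (hwμ : HasSum w (∑ a, μ a)) (a : A) :
    HasSum (fun n => w n * greedyKernel R w n a) (μ a) := by
  have term_nonneg (n : ℕ) : 0 ≤ w n * greedyKernel R w n a :=
    mul_nonneg (hw0 n) ((greedyKernel_mem_stdSimplex hR0 hR hw n).1 a)
  rw [hasSum_iff_tendsto_nat_of_nonneg term_nonneg]
  simpa only [greedyMass_eq_sum, Finset.sum_apply, Pi.smul_apply, smul_eq_mul] using
    tendsto_greedyMass hR0 hR hw hRμ hwμ.tendsto_sum_nat a

end GreedyFilling

section LocalInf

theorem bddBelow_range_of_nonneg {X : Type*} {f : X → ℝ} (hf : 0 ≤ f) : BddBelow (Set.range f) :=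
  ⟨0, Set.forall_mem_range.2 hf⟩

variable {S E : Type*} {V W : Set S} {f : (S → E) → ℝ} {η ζ : S → E}

/-- The infimum of `f` over the configurations that agree with `η` on the window `V`. With
`V = V_i(k)` and `f = p(a, ·)` this is `r^{[k]}(a, η(V_i(k)))`. -/
noncomputable def localInf (V : Set S) (f : (S → E) → ℝ) (η : S → E) : ℝ :=
  sInf (f '' {ζ | Set.EqOn η ζ V})

theorem localInf_le_of_eqOn (hf : BddBelow (Set.range f)) (h : Set.EqOn η ζ V) :
    localInf V f η ≤ f ζ :=
  csInf_le (hf.mono (Set.image_subset_range _ _)) (Set.mem_image_of_mem f h)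

theorem le_localInf {c : ℝ} (h : ∀ ζ, Set.EqOn η ζ V → c ≤ f ζ) : c ≤ localInf V f η :=
  le_csInf ⟨f η, Set.mem_image_of_mem f (Set.eqOn_refl η V)⟩ (Set.forall_mem_image.2 h)

theorem localInf_le (hf : BddBelow (Set.range f)) : localInf V f ≤ f :=
  fun η => localInf_le_of_eqOn hf (Set.eqOn_refl η V)

theorem localInf_nonneg (hf : 0 ≤ f) : 0 ≤ localInf V f :=
  fun _ => le_localInf fun ζ _ => hf ζ

theorem localInf_mono (hf : BddBelow (Set.range f)) (hVW : V ⊆ W) :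
    localInf V f ≤ localInf W f :=
  fun _ => le_localInf fun _ h => localInf_le_of_eqOn hf (h.mono hVW)

theorem localInf_congr (h : Set.EqOn η ζ V) : localInf V f η = localInf V f ζ := by
  have same_class : {ξ | Set.EqOn η ξ V} = {ξ | Set.EqOn ζ ξ V} :=
    Set.ext fun _ => ⟨h.symm.trans, h.trans⟩
  rw [localInf, same_class, localInf]

end LocalInf

section CommonMass

variable {S E A : Type*} {V W : Set S} {p : A → (S → E) → ℝ}

/-- The largest variation of the kernel `p` between configurations that agree on `V`; with
`V = V_i(k)` this is `δ(k)`. -/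
noncomputable def oscillationOff (V : Set S) (p : A → (S → E) → ℝ) : ℝ :=
  sSup {x | ∃ (a : A) (η ζ : S → E), Set.EqOn η ζ V ∧ |p a η - p a ζ| = x}

variable [Fintype A]

/-- The mass that `p` is certain to place irrespective of the configuration off the window `V`, in
the worst case over the configuration on `V`; with `V = V_i(k)` this is `α(k)`. -/
noncomputable def commonMass (V : Set S) (p : A → (S → E) → ℝ) : ℝ :=
  ⨅ η, ∑ a, localInf V (p a) η

theorem abs_sub_le_oscillationOff (hp : ∀ η, (p · η) ∈ stdSimplex ℝ A) (a : A) {η ζ : S → E}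
    (h : Set.EqOn η ζ V) : |p a η - p a ζ| ≤ oscillationOff V p := by
  refine le_csSup ⟨1, ?_⟩ ⟨a, η, ζ, h, rfl⟩
  rintro _ ⟨b, ξ, ξ', -, rfl⟩
  have hξ := mem_Icc_of_mem_stdSimplex (hp ξ) b
  have hξ' := mem_Icc_of_mem_stdSimplex (hp ξ') b
  exact abs_sub_le_of_nonneg_of_le hξ.1 hξ.2 hξ'.1 hξ'.2

theorem commonMass_le_sum_localInf (hp : 0 ≤ p) (V : Set S) (η : S → E) :
    commonMass V p ≤ ∑ a, localInf V (p a) η :=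
  ciInf_le ⟨0, Set.forall_mem_range.2 fun ζ => sum_nonneg fun a _ => localInf_nonneg (hp a) ζ⟩ η

theorem commonMass_nonneg (hp : 0 ≤ p) (V : Set S) : 0 ≤ commonMass V p :=
  Real.iInf_nonneg fun η => sum_nonneg fun a _ => localInf_nonneg (hp a) η

variable [Nonempty E]

theorem commonMass_mono (hp : 0 ≤ p) (hVW : V ⊆ W) : commonMass V p ≤ commonMass W p :=
  le_ciInf fun η => (commonMass_le_sum_localInf hp V η).trans <|
    sum_le_sum fun a _ => localInf_mono (bddBelow_range_of_nonneg (hp a)) hVW η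

theorem commonMass_le_one (hp : ∀ η, (p · η) ∈ stdSimplex ℝ A) (V : Set S) :
    commonMass V p ≤ 1 := by
  have hp0 : 0 ≤ p := fun a η => (hp η).1 a
  obtain ⟨η⟩ : Nonempty (S → E) := inferInstance
  calc commonMass V p ≤ ∑ a, localInf V (p a) η := commonMass_le_sum_localInf hp0 V η
    _ ≤ ∑ a, p a η := sum_le_sum fun a _ => localInf_le (bddBelow_range_of_nonneg (hp0 a)) η
    _ = 1 := (hp η).2

theorem one_sub_card_mul_oscillationOff_le_commonMass (hp : ∀ η, (p · η) ∈ stdSimplex ℝ A)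
    (V : Set S) : 1 - Fintype.card A * oscillationOff V p ≤ commonMass V p := by
  refine le_ciInf fun η => ?_
  have sub_oscillation_le (a : A) : p a η - oscillationOff V p ≤ localInf V (p a) η :=
    le_localInf fun ζ h =>
      sub_le_comm.1 ((le_abs_self _).trans (abs_sub_le_oscillationOff hp a h))
  calc 1 - Fintype.card A * oscillationOff V p = ∑ a, (p a η - oscillationOff V p) := by
        rw [sum_sub_distrib, (hp η).2, sum_const, nsmul_eq_mul, card_univ]
    _ ≤ ∑ a, localInf V (p a) η := sum_le_sum fun a _ => sub_oscillation_le a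

theorem tendsto_commonMass {ι : Type*} {l : Filter ι} {V : ι → Set S}
    (hp : ∀ η, (p · η) ∈ stdSimplex ℝ A)
    (hcont : Tendsto (fun k => oscillationOff (V k) p) l (𝓝 0)) :
    Tendsto (fun k => commonMass (V k) p) l (𝓝 1) := by
  have lower_tendsto :
      Tendsto (fun k => 1 - Fintype.card A * oscillationOff (V k) p) l (𝓝 1) := by
    simpa using (hcont.const_mul (Fintype.card A : ℝ)).const_sub 1
  exact tendsto_of_tendsto_of_tendsto_of_le_of_le lower_tendsto tendsto_const_nhds
    (fun k => one_sub_card_mul_oscillationOff_le_commonMass hp (V k))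
    fun k => commonMass_le_one hp (V k)

end CommonMass

section MixtureWeight

variable {S E A : Type*} [Fintype A] {V : ℤ → Set S} {p : A → (S → E) → ℝ}

/-- The increments `λ(k)`, `k ≥ -1`, of the common mass along the windows `V (-1), V 0, V 1, …`. -/
noncomputable def mixtureWeight (V : ℤ → Set S) (p : A → (S → E) → ℝ) (k : ℤ) : ℝ :=
  if k = -1 then commonMass (V (-1)) p else commonMass (V k) p - commonMass (V (k - 1)) p

theorem sum_range_mixtureWeight (V : ℤ → Set S) (p : A → (S → E) → ℝ) (n : ℕ) :
    ∑ m ∈ range (n + 1), mixtureWeight V p (m - 1) = commonMass (V (n - 1)) p := by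
  induction n with
  | zero => simp [mixtureWeight]
  | succ n ih =>
    have index_ne : ((n + 1 : ℕ) : ℤ) - 1 ≠ -1 := by omega
    have index_sub : ((n + 1 : ℕ) : ℤ) - 1 - 1 = n - 1 := by omega
    rw [sum_range_succ, ih, mixtureWeight, if_neg index_ne, index_sub, add_sub_cancel]

variable [Nonempty E]

theorem mixtureWeight_nonneg (hV : Monotone V) (hp : 0 ≤ p) (k : ℤ) :
    0 ≤ mixtureWeight V p k := by
  unfold mixtureWeight
  split_ifs
  · exact commonMass_nonneg hp _
  · exact sub_nonneg.2 (commonMass_mono hp (hV (sub_le_self k zero_le_one)))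

theorem hasSum_mixtureWeight (hV : Monotone V) (hp : ∀ η, (p · η) ∈ stdSimplex ℝ A)
    (hcont : Tendsto (fun k : ℕ => oscillationOff (V k) p) atTop (𝓝 0)) :
    HasSum (fun n : ℕ => mixtureWeight V p (n - 1)) 1 := by
  rw [hasSum_iff_tendsto_nat_of_nonneg
    (fun n => mixtureWeight_nonneg hV (fun a η => (hp η).1 a) _), ← tendsto_add_atTop_iff_nat 2]
  have partial_sum (n : ℕ) :
      ∑ m ∈ range (n + 2), mixtureWeight V p (m - 1) = commonMass (V n) p := by
    simpa using sum_range_mixtureWeight V p (n + 1)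
  simpa only [partial_sum] using tendsto_commonMass hp hcont

end MixtureWeight

theorem decomposition_as_countable_mixture_general {S E A : Type*} [Fintype A] [Nonempty E]
    {V : ℤ → Set S} (hV : Monotone V) {p : A → (S → E) → ℝ}
    (hp : ∀ η, (p · η) ∈ stdSimplex ℝ A)
    (hcont : Tendsto (fun k : ℕ => oscillationOff (V k) p) atTop (𝓝 0)) :
    ∃ q : ℤ → A → (S → E) → ℝ,
      (∀ k η, (q k · η) ∈ stdSimplex ℝ A) ∧
      (∀ k a η ζ, -1 ≤ k → Set.EqOn η ζ (V k) → q k a η = q k a ζ) ∧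
      ∀ a η, HasSum (fun n : ℕ => mixtureWeight V p (n - 1) * q (n - 1) a η) (p a η) := by
  have hp0 : 0 ≤ p := fun a η => (hp η).1 a
  have : Nonempty A := not_isEmpty_iff.1 fun _ => by
    simpa using (hp (Classical.arbitrary (S → E))).2
  let R (η : S → E) (n : ℕ) (a : A) : ℝ := localInf (V (n - 1)) (p a) η
  let w (n : ℕ) : ℝ := mixtureWeight V p (n - 1)
  have hR0 (η : S → E) : 0 ≤ R η 0 := fun a => localInf_nonneg (hp0 a) η
  have hR (η : S → E) : Monotone (R η) := fun m n hmn a =>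
    localInf_mono (bddBelow_range_of_nonneg (hp0 a)) (hV (by omega)) η
  have hRp (η : S → E) (n : ℕ) : R η n ≤ (p · η) := fun a =>
    localInf_le (bddBelow_range_of_nonneg (hp0 a)) η
  have hw (η : S → E) (n : ℕ) : ∑ m ∈ range (n + 1), w m ≤ ∑ a, R η n a :=
    (sum_range_mixtureWeight V p n).trans_le (commonMass_le_sum_localInf hp0 _ η)
  refine ⟨fun k a η => greedyKernel (R η) w (k + 1).toNat a, fun k η => ?_,
    fun k a η ζ hk h => ?_, fun a η => ?_⟩
  · exact greedyKernel_mem_stdSimplex (hR0 η) (hR η) (hw η) _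
  · have bounds_eq (m : ℕ) (hm : m ≤ (k + 1).toNat) : R η m = R ζ m :=
      funext fun _ => localInf_congr (h.mono (hV (by omega)))
    exact congrFun (greedyKernel_congr bounds_eq) a
  · have hw_sum : HasSum w (∑ b, p b η) := (hp η).2 ▸ hasSum_mixtureWeight hV hp hcont
    simpa using hasSum_greedyKernel (hR0 η) (hR η) (fun n => mixtureWeight_nonneg hV hp0 _)
      (hw η) (hRp η) hw_sum a

theorem ball_mono {d : ℕ} (i : Fin d → ℤ) : Monotone (ball i) :=
  fun _ _ hkl _ hj => le_trans hj hkl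

/-- Theorem 2.1 of Galves–Garcia–Löcherbach: under the continuity
condition and the summability condition `Σ_{k≥0} |V_i(k)| λ(k) < ∞`, the probability
kernel `p` decomposes as a countable mixture `p(a,η) = Σ_{k≥-1} λ(k) p^{[k]}(a, η(V_i(k)))`
of local kernels `p^{[k]}` (functions of `η(V_i(k))` only, probabilities on `A`). -/
theorem decomposition_as_countable_mixture
    {d : ℕ} (hd : 1 ≤ d) (A : Type*) [Fintype A] (hA : 2 ≤ Fintype.card A)
    (i : Fin d → ℤ) (p : A → ((Fin d → ℤ) → A) → ℝ)
    (hp0 : ∀ a η, 0 ≤ p a η) (hp1 : ∀ a η, p a η ≤ 1)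
    (hpsum : ∀ η, ∑ a, p a η = 1)
    (hcont : Filter.Tendsto (fun k : ℕ => delta i p k) Filter.atTop (nhds 0))
    (hsummable : Summable (fun k : ℕ => ((ball i (k : ℤ)).ncard : ℝ) * lamfun i p k)) :
    ∃ pk : ℤ → A → ((Fin d → ℤ) → A) → ℝ,
      (∀ (k : ℤ) (a : A) (η : (Fin d → ℤ) → A), -1 ≤ k →
        0 ≤ pk k a η ∧ pk k a η ≤ 1) ∧
      (∀ (k : ℤ) (a : A) (η ζ : (Fin d → ℤ) → A), -1 ≤ k →
        (∀ j ∈ ball i k, η j = ζ j) → pk k a η = pk k a ζ) ∧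
      (∀ (k : ℤ) (η : (Fin d → ℤ) → A), -1 ≤ k → ∑ a, pk k a η = 1) ∧
      (∀ (a : A) (η : (Fin d → ℤ) → A),
        HasSum (fun n : ℕ => lamfun i p ((n : ℤ) - 1) * pk ((n : ℤ) - 1) a η) (p a η)) := by
  have : Nonempty A := Fintype.card_pos_iff.1 (by omega)
  -- For `V = ball i`, `oscillationOff` and `mixtureWeight` unfold to `delta` and `lamfun`.
  obtain ⟨q, hq, hlocal, hmix⟩ := decomposition_as_countable_mixture_general (ball_mono i)
    (fun η => ⟨fun a => hp0 a η, hpsum η⟩) hcont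
  exact ⟨q, fun k a η _ => mem_Icc_of_mem_stdSimplex (hq k η) a, hlocal,
    fun k η _ => (hq k η).2, hmix⟩
end

section
/- Assume in addition that the sequence (q_l)_{l≥0} is nonincreasing and converges to q_∞. Then for every integer k ≥ 0, α_i(k) := min_{w ∈ {0,1}^{V_i(k)}} ( inf{c_i(1−w(i), ζ) : ζ ∈ {0,1}^{ℤ^d}, ζ(V_i(k)) = w} + 1 − sup{c_i(1−w(i), ζ) : ζ ∈ {0,1}^{ℤ^d}, ζ(V_i(k)) = w} ) = 1 − q_k + q_∞. -/
open scoped BigOperators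

/-- For a configuration `η` having a `1` at some site `≠ i`, `lidx i η` is the unique
`l ≥ 0` such that `η ≡ 0` on `V_i(l) \ {i}` and `η` takes the value `1` somewhere on
`V_i(l+1) \ {i}`; it is the smallest `l` such that some site `j ≠ i` with
`‖j - i‖₁ ≤ l + 1` has `η j = 1`. -/
noncomputable def lidx {d : ℕ} (i : Fin d → ℤ) (η : (Fin d → ℤ) → Bool) : ℕ :=
  sInf {l : ℕ | ∃ j, j ≠ i ∧ norm1 (j - i) ≤ (l : ℤ) + 1 ∧ η j = true}

/- The rates of the example: `c_i(1,η) = q_{l_i(η)}` if `η` has a `1` off `i`,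
`c_i(1,η) = q_∞` otherwise, and `c_i(0,η) = 1 - c_i(1,η)`. -/
open Classical in
noncomputable def crate {d : ℕ} (i : Fin d → ℤ) (q : ℕ → ℝ) (qinf : ℝ)
    (b : Bool) (η : (Fin d → ℤ) → Bool) : ℝ :=
  if b then (if ∃ j, j ≠ i ∧ η j = true then q (lidx i η) else qinf)
  else 1 - (if ∃ j, j ≠ i ∧ η j = true then q (lidx i η) else qinf)

/-!
Fix the values `w` of a configuration on `V_i(k)`. If `w` has a `1` off `i`, then `w` determines the
rate. Otherwise the rates `c_i(1, ζ)` over the extensions `ζ` of `w` are values `q_l` with `l ≥ k`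
or `q_∞`, and all of these occur when `w = 0`: put a single `1` at distance `l + 1` from `i`, or
none at all. Since supremum minus infimum is the diameter, `α_i(k)` is one minus the diameter of
`{q_l : l ≥ k} ∪ {q_∞}`, for any bounded sequence. For a nonincreasing sequence with limit `q_∞`
this diameter is `q_k - q_∞`.
-/

/-- The set `{q_l : l ≥ k} ∪ {q_∞}` of the rates `c_i(1, ζ)` of configurations `ζ` that vanish on
`V_i(k) \ {i}`. -/
def tailRates (q : ℕ → ℝ) (qinf : ℝ) (k : ℕ) : Set ℝ :=
  insert qinf (q '' Set.Ici k)

theorem isBounded_tailRates {q : ℕ → ℝ} (hq : Bornology.IsBounded (Set.range q)) (qinf : ℝ)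
    (k : ℕ) : Bornology.IsBounded (tailRates q qinf k) :=
  (hq.subset (Set.image_subset_range q _)).insert qinf

theorem diam_tailRates_of_antitone {q : ℕ → ℝ} {qinf : ℝ} (hmono : Antitone q)
    (hlim : Filter.Tendsto q Filter.atTop (nhds qinf)) (k : ℕ) :
    Metric.diam (tailRates q qinf k) = q k - qinf := by
  have hle : ∀ l, qinf ≤ q l := hmono.le_of_tendsto hlim
  have hleast : IsLeast (tailRates q qinf k) qinf :=
    ⟨Set.mem_insert _ _, Set.forall_mem_insert.2 ⟨le_rfl, Set.forall_mem_image.2 fun l _ => hle l⟩⟩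
  have hgreatest : IsGreatest (tailRates q qinf k) (q k) :=
    ⟨Set.mem_insert_of_mem _ ⟨k, Set.self_mem_Ici, rfl⟩,
      Set.forall_mem_insert.2 ⟨hle k, Set.forall_mem_image.2 fun _ hl => hmono hl⟩⟩
  rw [Real.diam_eq (Metric.isBounded_of_bddAbove_of_bddBelow hgreatest.bddAbove hleast.bddBelow),
    hgreatest.csSup_eq, hleast.csInf_eq]

section Lattice

variable {d : ℕ}

theorem norm1_pos_iff {x : Fin d → ℤ} : 0 < norm1 x ↔ x ≠ 0 := by
  refine ⟨?_, fun hx => ?_⟩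
  · rintro hpos rfl
    simp [norm1] at hpos
  · obtain ⟨u, hu⟩ := Function.ne_iff.1 hx
    exact Finset.sum_pos' (fun v _ => abs_nonneg (x v)) ⟨u, Finset.mem_univ u, abs_pos.2 hu⟩

theorem norm1_single (u : Fin d) (a : ℤ) : norm1 (Pi.single u a) = |a| := by
  rw [norm1, Finset.sum_eq_single_of_mem u (Finset.mem_univ u), Pi.single_eq_same]
  intro v _ hv
  rw [Pi.single_eq_of_ne hv, abs_zero]

theorem ball_subset_ball (i : Fin d → ℤ) {k l : ℤ} (h : k ≤ l) : ball i k ⊆ ball i l :=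
  fun _ hj => le_trans hj h

end Lattice

section Configurations

variable {d : ℕ} {i : Fin d → ℤ} {k : ℕ} {η ζ : (Fin d → ℤ) → Bool}

/-- The configuration `η` is zero on `V_i(k) \ {i}`; its value at `i` is not constrained. -/
def VanishesNear (i : Fin d → ℤ) (k : ℕ) (η : (Fin d → ℤ) → Bool) : Prop :=
  ∀ j ∈ ball i k, j ≠ i → η j = false

/-- The cylinder `{ζ : ζ(V_i(k)) = η(V_i(k))}`, which encodes the restriction `w = η(V_i(k))` by
any of its extensions `η`. -/
def cylinder (i : Fin d → ℤ) (k : ℕ) (η : (Fin d → ℤ) → Bool) : Set ((Fin d → ℤ) → Bool) :=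
  {ζ | ∀ j ∈ ball i k, η j = ζ j}

theorem self_mem_cylinder : η ∈ cylinder i k η :=
  fun _ _ => rfl

theorem VanishesNear.of_mem_cylinder (hη : VanishesNear i k η) (hζ : ζ ∈ cylinder i k η) :
    VanishesNear i k ζ :=
  fun j hj hji => (hζ j hj).symm.trans (hη j hj hji)

theorem exists_one_of_not_vanishesNear (hη : ¬VanishesNear i k η) : ∃ j, j ≠ i ∧ η j = true := by
  contrapose! hη
  exact fun j _ hji => Bool.eq_false_of_not_eq_true (hη j hji)

theorem le_lidx_iff (hη : ∃ j, j ≠ i ∧ η j = true) : k ≤ lidx i η ↔ VanishesNear i k η := by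
  constructor
  · intro hk j hj hji
    by_contra hone
    have hpos : 0 < norm1 (j - i) := norm1_pos_iff.2 (sub_ne_zero.2 hji)
    have hnorm : norm1 (j - i) ≤ k := hj
    have hle : lidx i η ≤ k - 1 :=
      Nat.sInf_le ⟨j, hji, by omega, Bool.eq_true_of_not_eq_false hone⟩
    omega
  · intro hvan
    obtain ⟨j, hji, hj⟩ := hη
    have hne : {l : ℕ | ∃ j, j ≠ i ∧ norm1 (j - i) ≤ (l : ℤ) + 1 ∧ η j = true}.Nonempty :=
      ⟨(norm1 (j - i)).toNat, j, hji, by omega, hj⟩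
    refine le_csInf hne ?_
    rintro l ⟨s, hsi, hs, hone⟩
    by_contra! hlk
    have hmem : s ∈ ball i k := hs.trans (by exact_mod_cast hlk)
    simp [hvan s hmem hsi] at hone

theorem lidx_le_of_mem_cylinder (hη : ¬VanishesNear i k η) (hζ : ζ ∈ cylinder i k η) :
    lidx i η ≤ lidx i ζ := by
  have hlt : lidx i η < k := not_le.1 (mt (le_lidx_iff (exists_one_of_not_vanishesNear hη)).1 hη)
  have hvan : VanishesNear i (lidx i η) η :=
    (le_lidx_iff (exists_one_of_not_vanishesNear hη)).1 le_rfl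
  have hsub : ball i (lidx i η) ⊆ ball i k := ball_subset_ball i (by exact_mod_cast hlt.le)
  have hζone : ¬VanishesNear i k ζ := fun h =>
    hη (h.of_mem_cylinder fun j hj => (hζ j hj).symm)
  exact (le_lidx_iff (exists_one_of_not_vanishesNear hζone)).2
    (hvan.of_mem_cylinder fun j hj => hζ j (hsub hj))

theorem lidx_indicator {s : Fin d → ℤ} {l : ℕ} (hs : norm1 (s - i) = l + 1) :
    lidx i (fun j => decide (j = s)) = l := by
  have hsi : s ≠ i := sub_ne_zero.1 (norm1_pos_iff.1 (by omega))
  refine le_antisymm (Nat.sInf_le ⟨s, hsi, hs.le, decide_eq_true rfl⟩)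
    ((le_lidx_iff ⟨s, hsi, decide_eq_true rfl⟩).2 ?_)
  rintro j hj -
  refine decide_eq_false ?_
  rintro rfl
  have hle : norm1 (j - i) ≤ l := hj
  omega

end Configurations

section Rates

variable {d : ℕ} {i : Fin d → ℤ} {k : ℕ} {η ζ ξ : (Fin d → ℤ) → Bool} {q : ℕ → ℝ} {qinf : ℝ}

theorem crate_true_of_exists_one (hη : ∃ j, j ≠ i ∧ η j = true) :
    crate i q qinf true η = q (lidx i η) := by
  simp only [crate, if_true, if_pos hη]

theorem crate_true_of_not_exists_one (hη : ¬∃ j, j ≠ i ∧ η j = true) :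
    crate i q qinf true η = qinf := by
  simp only [crate, if_true, if_neg hη]

theorem crate_false_eq_one_sub : crate i q qinf false η = 1 - crate i q qinf true η := by
  simp [crate]

theorem dist_crate_eq (b : Bool) :
    dist (crate i q qinf b ζ) (crate i q qinf b ξ) =
      dist (crate i q qinf true ζ) (crate i q qinf true ξ) := by
  cases b
  · rw [crate_false_eq_one_sub, crate_false_eq_one_sub, dist_sub_left]
  · rfl

theorem crate_true_mem_tailRates (hη : VanishesNear i k η) :
    crate i q qinf true η ∈ tailRates q qinf k := by
  by_cases hone : ∃ j, j ≠ i ∧ η j = true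
  · rw [crate_true_of_exists_one hone]
    exact Set.mem_insert_of_mem _ ⟨lidx i η, (le_lidx_iff hone).2 hη, rfl⟩
  · rw [crate_true_of_not_exists_one hone]
    exact Set.mem_insert _ _

theorem crate_true_eq_of_mem_cylinder (hη : ¬VanishesNear i k η) (hζ : ζ ∈ cylinder i k η) :
    crate i q qinf true ζ = crate i q qinf true η := by
  have hη' : η ∈ cylinder i k ζ := fun j hj => (hζ j hj).symm
  have hζ' : ¬VanishesNear i k ζ := fun h => hη (h.of_mem_cylinder hη')
  rw [crate_true_of_exists_one (exists_one_of_not_vanishesNear hζ'),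
    crate_true_of_exists_one (exists_one_of_not_vanishesNear hη),
    le_antisymm (lidx_le_of_mem_cylinder hζ' hη') (lidx_le_of_mem_cylinder hη hζ)]

theorem exists_mem_cylinder_zero_crate_true_eq (u : Fin d) {l : ℕ} (hl : k ≤ l) :
    ∃ ζ ∈ cylinder i k fun _ => false, crate i q qinf true ζ = q l := by
  let s : Fin d → ℤ := i + Pi.single u ((l : ℤ) + 1)
  have hs : norm1 (s - i) = l + 1 := by
    rw [add_sub_cancel_left, norm1_single, abs_of_nonneg (by positivity)]
  have hsi : s ≠ i := sub_ne_zero.1 (norm1_pos_iff.1 (by omega))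
  refine ⟨fun j => decide (j = s), fun j hj => (decide_eq_false ?_).symm, ?_⟩
  · rintro rfl
    have hle : norm1 (s - i) ≤ k := hj
    omega
  · rw [crate_true_of_exists_one ⟨s, hsi, decide_eq_true rfl⟩, lidx_indicator hs]

/-- The possible rates `c_i(1 - w(i), ζ)` of flipping the site `i`, where `ζ` runs over the
configurations with `ζ(V_i(k)) = w` for `w = η(V_i(k))`. -/
def flipRates (i : Fin d → ℤ) (q : ℕ → ℝ) (qinf : ℝ) (k : ℕ) (η : (Fin d → ℤ) → Bool) : Set ℝ :=
  crate i q qinf (!(η i)) '' cylinder i k η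

theorem flipRates_zero [NeZero d] :
    flipRates i q qinf k (fun _ => false) = tailRates q qinf k := by
  refine Set.Subset.antisymm ?_ (Set.insert_subset ?_ ?_)
  · rintro _ ⟨ζ, hζ, rfl⟩
    exact crate_true_mem_tailRates fun j hj _ => (hζ j hj).symm
  · exact ⟨_, self_mem_cylinder, crate_true_of_not_exists_one (by simp)⟩
  · rintro _ ⟨l, hl, rfl⟩
    exact exists_mem_cylinder_zero_crate_true_eq 0 hl

theorem dist_le_diam_tailRates (hq : Bornology.IsBounded (Set.range q)) {x y : ℝ}
    (hx : x ∈ flipRates i q qinf k η) (hy : y ∈ flipRates i q qinf k η) :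
    dist x y ≤ Metric.diam (tailRates q qinf k) := by
  obtain ⟨ζ, hζ, rfl⟩ := hx
  obtain ⟨ξ, hξ, rfl⟩ := hy
  rw [dist_crate_eq]
  by_cases hη : VanishesNear i k η
  · exact Metric.dist_le_diam_of_mem (isBounded_tailRates hq qinf k)
      (crate_true_mem_tailRates (hη.of_mem_cylinder hζ))
      (crate_true_mem_tailRates (hη.of_mem_cylinder hξ))
  · rw [crate_true_eq_of_mem_cylinder hη hζ, crate_true_eq_of_mem_cylinder hη hξ, dist_self]
    exact Metric.diam_nonneg

theorem sInf_add_one_sub_sSup_flipRates (hq : Bornology.IsBounded (Set.range q)) :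
    sInf (flipRates i q qinf k η) + 1 - sSup (flipRates i q qinf k η) =
      1 - Metric.diam (flipRates i q qinf k η) := by
  rw [Real.diam_eq (Metric.isBounded_iff.2 ⟨_, fun _ hx _ hy => dist_le_diam_tailRates hq hx hy⟩)]
  ring

end Rates

theorem example_alpha_k_general {d : ℕ} (hd : 1 ≤ d) (i : Fin d → ℤ) {q : ℕ → ℝ}
    (hq : Bornology.IsBounded (Set.range q)) (qinf : ℝ) (k : ℕ) :
    IsLeast
      (Set.range fun η => sInf (flipRates i q qinf k η) + 1 - sSup (flipRates i q qinf k η))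
      (1 - Metric.diam (tailRates q qinf k)) := by
  have : NeZero d := ⟨Nat.one_le_iff_ne_zero.1 hd⟩
  simp only [sInf_add_one_sub_sSup_flipRates hq]
  refine ⟨⟨fun _ => false, congrArg (1 - Metric.diam ·) flipRates_zero⟩,
    Set.forall_mem_range.2 fun η => ?_⟩
  exact sub_le_sub_left (Metric.diam_le_of_forall_dist_le Metric.diam_nonneg
    fun _ hx _ hy => dist_le_diam_tailRates hq hx hy) 1

/-- if `(q_l)` is nonincreasing with limit `q_∞`, then for every
`k ≥ 0`,
`α_i(k) = min_{w ∈ {0,1}^{V_i(k)}} ( inf_{ζ(V_i(k)) = w} c_i(1-w(i),ζ) + 1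
            - sup_{ζ(V_i(k)) = w} c_i(1-w(i),ζ) ) = 1 - q_k + q_∞`
(the minimum over `w` being expressed as the infimum over configurations `η`, the
bracketed quantity depending only on `η(V_i(k))`). -/
theorem example_alpha_k
    {d : ℕ} (hd : 1 ≤ d) (i : Fin d → ℤ)
    (q : ℕ → ℝ) (hq : ∀ l, 0 < q l ∧ q l < 1) (qinf : ℝ)
    (hqinf0 : 0 ≤ qinf) (hqinf1 : qinf ≤ 1)
    (hmono : Antitone q) (hlim : Filter.Tendsto q Filter.atTop (nhds qinf)) :
    ∀ k : ℕ,
      sInf {x | ∃ η : (Fin d → ℤ) → Bool,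
        (sInf {y | ∃ ζ : (Fin d → ℤ) → Bool,
            (∀ j ∈ ball i (k : ℤ), η j = ζ j) ∧ crate i q qinf (!(η i)) ζ = y}
          + 1
          - sSup {y | ∃ ζ : (Fin d → ℤ) → Bool,
              (∀ j ∈ ball i (k : ℤ), η j = ζ j) ∧ crate i q qinf (!(η i)) ζ = y}) = x}
      = 1 - q k + qinf := by
  intro k
  have hbdd : Bornology.IsBounded (Set.range q) :=
    (Metric.isBounded_Icc 0 1).subset (Set.range_subset_iff.2 fun l => ⟨(hq l).1.le, (hq l).2.le⟩)
  refine (example_alpha_k_general hd i hbdd qinf k).csInf_eq.trans ?_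
  rw [diam_tailRates_of_antitone hmono hlim, sub_sub_eq_add_sub, add_sub_right_comm]
end
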